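/- Let f : C([n],k) → R, let 0 ≤ i ≤ n, and let U ⊆ [i]. Then (1/C(n,k)) · Σ_{S ⊆ [n]∖[i]} f̂(U ∪ S)² = Σ_{z ∈ {0,1}^{n−i}} (C(i, k−|z|)/C(n,k)) · (1/C(i, k−|z|)) · f̂_z(U)²; that is, the total Fourier weight of f on sets extending U by elements of [n]∖[i], normalized by C(n,k), is the expectation of f̂_x(U)²/C(i, k−|x|) when x ∈ {0,1}^{n−i} is drawn with probability C(i, k−|x|)/C(n,k). -/

import Mathlib

/-! The proof goes one coordinate at a time.  On the slice of weight `k`, the vector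
`P↑_{n,|S|,k} χ_{n,S}` equals `(k - |S|)!` times one function `basisFun n S` defined on the
whole cube, which is a product of explicit factors, one for each element of `S`.  Write
`u = |S|`.  Summing `basisFun n S` over the lower covers of `x` multiplies it by `|x| - u`
(`sum_covers_below`), and summing over the upper covers multiplies it by `n - u - |x|`
(`sum_covers_above`).  Double counting then relates the norms on two consecutive layers
(`layerSum_sq_succ`).

Split the slice of weight `k + 1` in dimension `n + 1` along its last coordinate, and let
`U ⊆ [n]` with `u = |U|`.  Let `b₀` and `b₁` be `basisFun n U` on the layers of weight `k + 1`
and `k`.  On the two halves, the basis functions of `U` and of `U ∪ {n+1}` are `(b₀, b₁)` and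
`(-p b₀, q b₁) / (p + q - 1)`, where `p = k + 1 - u`, `q = n - k - u` and
`p ‖b₀‖² = q ‖b₁‖²`.  When `p, q > 0` they are therefore orthogonal and span the same plane
as `(b₀, 0)` and `(0, b₁)`, so the Fourier weights on `U` and `U ∪ {n+1}` add up to the
weights on `U` of the two restrictions (`weight_step_succ`).  If exactly one of `p`, `q` is
`0`, one half drops out of both sides, and `p = q = 0` is excluded by the conditions defining
`H`.  Iterating over the last `t` coordinates (`weight_iterate`) gives the theorem. -/

open scoped Classical

/-- The slice `C([n],k)`: vectors in `{0,1}^n` with exactly `k` ones. -/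
abbrev Slice (n k : ℕ) :=
  {x : Fin n → Bool // (Finset.univ.filter fun i => x i = true).card = k}

/-- The up operator `P↑_{n,k}`. -/
noncomputable def upOp (n k : ℕ) : Matrix (Slice n (k + 1)) (Slice n k) ℝ :=
  Matrix.of fun x y => if ∀ i, y.1 i = true → x.1 i = true then (1 : ℝ) else 0

/-- The down operator `P↓_{n,k}` (the transpose of `P↑_{n,k-1}`); it is the zero
matrix for `k = 0`. -/
noncomputable def downOp (n k : ℕ) : Matrix (Slice n (k - 1)) (Slice n k) ℝ :=
  Matrix.of fun x y => if 0 < k ∧ ∀ i, x.1 i = true → y.1 i = true then (1 : ℝ) else 0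

noncomputable def upPathAux (n i : ℕ) : (d : ℕ) → Matrix (Slice n (i + d)) (Slice n i) ℝ
  | 0 => show Matrix (Slice n (i + 0)) (Slice n i) ℝ from (1 : Matrix (Slice n i) (Slice n i) ℝ)
  | d + 1 => upOp n (i + d) * upPathAux n i d

/-- The iterated up operator `P↑_{n,i,k} = P↑_{n,k-1} ⋯ P↑_{n,i}`. -/
noncomputable def upPath (n i k : ℕ) : Matrix (Slice n k) (Slice n i) ℝ :=
  if h : i ≤ k then
    cast (by rw [Nat.add_sub_cancel' h]) (upPathAux n i (k - i))
  else 0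

/-- `P∨_{n,k} = P↑_{n,k-1} P↓_{n,k}`. -/
noncomputable def upDown (n k : ℕ) : Matrix (Slice n k) (Slice n k) ℝ :=
  if h : 1 ≤ k then
    cast (by rw [Nat.sub_add_cancel h]) (upOp n (k - 1) * downOp n k)
  else 0

/-- `P∧_{n,k} = P↓_{n,k+1} P↑_{n,k}`. -/
noncomputable def downUp (n k : ℕ) : Matrix (Slice n k) (Slice n k) ℝ :=
  downOp n (k + 1) * upOp n k

/-- `S ∈ H_{n,k}`: `S ⊆ {1,…,n}`, `|S| ≤ k`, and the `j`-th smallest element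
(1-indexed) is at least `2j`. -/
def IsH (n k : ℕ) (S : Finset ℕ) : Prop :=
  S ⊆ Finset.Icc 1 n ∧ S.card ≤ k ∧
    ∀ j, j < S.card → 2 * (j + 1) ≤ (S.sort (· ≤ ·)).getD j 0

lemma wcast_false {n : ℕ} (x : Fin (n + 1) → Bool) (h : ¬ x (Fin.last n) = true) :
    (Finset.univ.filter fun i : Fin n => x (Fin.castSucc i) = true).card
      = (Finset.univ.filter fun i : Fin (n + 1) => x i = true).card := by
  rw [Finset.card_filter, Finset.card_filter, Fin.sum_univ_castSucc]
  simp [h]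

lemma wcast_true {n : ℕ} (x : Fin (n + 1) → Bool) (h : x (Fin.last n) = true) :
    (Finset.univ.filter fun i : Fin n => x (Fin.castSucc i) = true).card + 1
      = (Finset.univ.filter fun i : Fin (n + 1) => x i = true).card := by
  rw [Finset.card_filter, Finset.card_filter, Fin.sum_univ_castSucc]
  simp [h]

/-- Forgetting the last coordinate of `x` when it equals `0`. -/
def dropLast {n m : ℕ} (x : Slice (n + 1) m) (h : ¬ x.1 (Fin.last n) = true) : Slice n m :=
  ⟨fun i => x.1 (Fin.castSucc i), by
    show (Finset.univ.filter fun i : Fin n => x.1 (Fin.castSucc i) = true).card = m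
    rw [wcast_false x.1 h]; exact x.2⟩

/-- Forgetting the last coordinate of `x` when it equals `1`. -/
def dropLastT {n m : ℕ} (x : Slice (n + 1) m) (h : x.1 (Fin.last n) = true) : Slice n (m - 1) :=
  ⟨fun i => x.1 (Fin.castSucc i), by
    show (Finset.univ.filter fun i : Fin n => x.1 (Fin.castSucc i) = true).card = m - 1
    have h1 := wcast_true x.1 h
    have h2 := x.2
    omega⟩

/-- The vector `χ_{n,S}` on the slice `C([n],|S|)`, defined recursively. -/
noncomputable def chi : (n : ℕ) → (S : Finset ℕ) → Slice n S.card → ℝ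
  | 0, _ => fun _ => 1
  | n + 1, S =>
    if hS : n + 1 ∈ S then
      fun x =>
        if hx : x.1 (Fin.last n) = true then
          chi n (S.erase (n + 1)) ⟨(dropLastT x hx).1, by
            show (Finset.univ.filter fun i : Fin n => x.1 (Fin.castSucc i) = true).card
              = (S.erase (n + 1)).card
            rw [Finset.card_erase_of_mem hS]
            exact (dropLastT x hx).2⟩
        else
          -(∑ y : Slice n (S.erase (n + 1)).card,
              (if ∀ i, y.1 i = true → (dropLast x hx).1 i = true then (1 : ℝ) else 0) *
                chi n (S.erase (n + 1)) y) / ((n : ℝ) + 1 - 2 * S.card + 1)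
    else
      fun x =>
        if hx : x.1 (Fin.last n) = true then 0
        else chi n S (dropLast x hx)

/-- The basis vector `P↑_{n,|S|,k} χ_{n,S}` of `R^{C([n],k)}`. -/
noncomputable def basisVec (n k : ℕ) (S : Finset ℕ) : Slice n k → ℝ :=
  (upPath n S.card k).mulVec (chi n S)

/-- The Fourier coefficient `f̂(S)`, equal to `0` when `S ∉ H_{n,min{k,n-k}}`. -/
noncomputable def fourierSlice (n k : ℕ) (f : Slice n k → ℝ) (S : Finset ℕ) : ℝ :=
  if IsH n (min k (n - k)) S then
    (∑ x, f x * basisVec n k S x) / Real.sqrt (∑ x, basisVec n k S x ^ 2)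
  else 0

/-- The Hamming weight of `z ∈ {0,1}^t`. -/
def wt {t : ℕ} (z : Fin t → Bool) : ℕ :=
  (Finset.univ.filter fun i => z i = true).card

/-- The concatenation `x ∘ z ∈ {0,1}^n` of `x ∈ {0,1}^{n-t}` with `z ∈ {0,1}^t`
(with `z` occupying the last `t` coordinates). -/
def catFun (n t : ℕ) (x : Fin (n - t) → Bool) (z : Fin t → Bool) : Fin n → Bool :=
  fun i =>
    if h : (i : ℕ) < n - t then x ⟨i, h⟩
    else if h2 : (i : ℕ) - (n - t) < t then z ⟨(i : ℕ) - (n - t), h2⟩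
    else false

/-- The restriction `f_z : C([n-t], k-|z|) → ℝ`, `f_z(x) = f(x ∘ z)`; it is
(the everywhere-zero function on) the empty function when `|z| > k`. -/
noncomputable def restrict (n k t : ℕ) (f : Slice n k → ℝ) (z : Fin t → Bool) :
    Slice (n - t) (k - wt z) → ℝ :=
  fun x =>
    if h : (Finset.univ.filter fun i => catFun n t x.1 z i = true).card = k then
      f ⟨catFun n t x.1 z, h⟩
    else 0

/-- The Fourier coefficient `f̂_z(S)` of the restriction `f_z`. -/
noncomputable def fourierSliceRestrict (n k t : ℕ) (f : Slice n k → ℝ) (z : Fin t → Bool)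
    (S : Finset ℕ) : ℝ :=
  fourierSlice (n - t) (k - wt z) (restrict n k t f z) S

/-- The adjacency matrix `A_{n,k}` of the Johnson graph. -/
noncomputable def johnsonAdj (n k : ℕ) : Matrix (Slice n k) (Slice n k) ℝ :=
  Matrix.of fun x y =>
    if (Finset.univ.filter fun i => x.1 i ≠ y.1 i).card = 2 then (1 : ℝ) else 0

/-! ### Cubes and layers -/

lemma wt_snoc_false {n : ℕ} (x : Fin n → Bool) :
    wt (Fin.snoc x false : Fin (n + 1) → Bool) = wt x := by
  unfold wt
  rw [Finset.card_filter, Finset.card_filter, Fin.sum_univ_castSucc]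
  simp

lemma wt_snoc_true {n : ℕ} (x : Fin n → Bool) :
    wt (Fin.snoc x true : Fin (n + 1) → Bool) = wt x + 1 := by
  unfold wt
  rw [Finset.card_filter, Finset.card_filter, Fin.sum_univ_castSucc]
  simp

lemma wt_init_false {n : ℕ} (x : Fin (n + 1) → Bool) (h : ¬ x (Fin.last n) = true) :
    wt (fun i : Fin n => x i.castSucc) = wt x :=
  wcast_false x h

lemma wt_init_true {n : ℕ} (x : Fin (n + 1) → Bool) (h : x (Fin.last n) = true) :
    wt (fun i : Fin n => x i.castSucc) + 1 = wt x :=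
  wcast_true x h

lemma sum_snoc {n : ℕ} (G : (Fin (n + 1) → Bool) → ℝ) :
    ∑ x, G x = ∑ x : Fin n → Bool, G (Fin.snoc x false)
      + ∑ x : Fin n → Bool, G (Fin.snoc x true) := by
  rw [← (Fin.snocEquiv (fun _ : Fin (n + 1) => Bool)).sum_comp, Fintype.sum_prod_type]
  simp [Fin.snocEquiv, add_comm]

/-- The sum of `G` over the vectors of Hamming weight `k`. -/
noncomputable def layerSum (n k : ℕ) (G : (Fin n → Bool) → ℝ) : ℝ :=
  ∑ x, if wt x = k then G x else 0

lemma layerSum_congr {n k : ℕ} {G H : (Fin n → Bool) → ℝ} (h : ∀ x, wt x = k → G x = H x) :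
    layerSum n k G = layerSum n k H := by
  unfold layerSum
  refine Finset.sum_congr rfl fun x _ => ?_
  split_ifs with hx
  · exact h x hx
  · rfl

lemma layerSum_mul {n k : ℕ} (c : ℝ) (G : (Fin n → Bool) → ℝ) :
    layerSum n k (fun x => c * G x) = c * layerSum n k G := by
  simp [layerSum, Finset.mul_sum]

lemma layerSum_zero_snoc {n : ℕ} (G : (Fin (n + 1) → Bool) → ℝ) :
    layerSum (n + 1) 0 G = layerSum n 0 (fun x => G (Fin.snoc x false)) := by
  simp [layerSum, sum_snoc, wt_snoc_false, wt_snoc_true]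

lemma layerSum_succ_snoc {n k : ℕ} (G : (Fin (n + 1) → Bool) → ℝ) :
    layerSum (n + 1) (k + 1) G = layerSum n (k + 1) (fun x => G (Fin.snoc x false))
      + layerSum n k (fun x => G (Fin.snoc x true)) := by
  simp [layerSum, sum_snoc, wt_snoc_false, wt_snoc_true]

lemma sum_slice {n k : ℕ} (G : (Fin n → Bool) → ℝ) :
    ∑ x : Slice n k, G x.1 = layerSum n k G := by
  unfold layerSum
  rw [← Finset.sum_filter]
  exact (Finset.sum_subtype _ (fun x => by simp only [Finset.mem_filter, Finset.mem_univ, true_and]; rfl) G).symm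

lemma layerSum_mul_eq_zero {n k : ℕ} (F G : (Fin n → Bool) → ℝ)
    (h : layerSum n k (fun x => G x ^ 2) = 0) : layerSum n k (fun x => F x * G x) = 0 := by
  unfold layerSum at *
  rw [Finset.sum_eq_zero_iff_of_nonneg (fun x _ => by split_ifs <;> positivity)] at h
  refine Finset.sum_eq_zero fun x hx => ?_
  have := h x hx
  split_ifs at this ⊢ with hw
  · simp [pow_eq_zero_iff] at this
    simp [this]
  · rfl

/-- `x` covers `y` in the Boolean lattice: `y ≤ x` and `|x| = |y| + 1`. -/
def Covers {n : ℕ} (x y : Fin n → Bool) : Prop :=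
  (∀ i, y i = true → x i = true) ∧ wt x = wt y + 1

lemma eq_of_le_of_wt {n : ℕ} {x y : Fin n → Bool} (h : ∀ i, y i = true → x i = true)
    (hw : wt x = wt y) : y = x := by
  have : (Finset.univ.filter fun i => y i = true) = Finset.univ.filter fun i => x i = true := by
    apply Finset.eq_of_subset_of_card_le
    · intro i; simpa using h i
    · exact hw.le
  funext i
  have := congrArg (i ∈ ·) this
  simp at this
  exact this

lemma covers_snoc_same {n : ℕ} (x y : Fin n → Bool) (b : Bool) :
    Covers (Fin.snoc x b : Fin (n + 1) → Bool) (Fin.snoc y b) ↔ Covers x y := by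
  cases b <;> simp [Covers, Fin.forall_fin_succ', wt_snoc_false, wt_snoc_true]

lemma covers_snoc_false_true {n : ℕ} (x y : Fin n → Bool) :
    ¬ Covers (Fin.snoc x false : Fin (n + 1) → Bool) (Fin.snoc y true) := by
  simp [Covers, Fin.forall_fin_succ']

lemma covers_snoc_true_false {n : ℕ} (x y : Fin n → Bool) :
    Covers (Fin.snoc x true : Fin (n + 1) → Bool) (Fin.snoc y false) ↔ y = x := by
  simp only [Covers, Fin.forall_fin_succ', wt_snoc_false, wt_snoc_true]
  constructor
  · rintro ⟨⟨h, _⟩, hw⟩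
    exact eq_of_le_of_wt (by simpa using h) (by omega)
  · rintro rfl; simp

/-! ### The basis functions on the whole cube -/

/-- The common extension to the cube of the vectors `P↑_{n,|S|,k} χ_{n,S} / (k - |S|)!`.
An element `n + 1 ∈ S` contributes a factor depending on the last coordinate and on the weight
of the preceding ones. -/
noncomputable def basisFun : (n : ℕ) → Finset ℕ → (Fin n → Bool) → ℝ
  | 0, _, _ => 1
  | n + 1, S, x =>
    if n + 1 ∈ S then
      (if x (Fin.last n) = true then
          ((n : ℝ) - (S.erase (n + 1)).card - wt (fun i : Fin n => x i.castSucc))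
        else -((wt (fun i : Fin n => x i.castSucc) : ℝ) - (S.erase (n + 1)).card))
          / ((n : ℝ) - 2 * (S.erase (n + 1)).card)
        * basisFun n (S.erase (n + 1)) (fun i => x i.castSucc)
    else basisFun n S (fun i => x i.castSucc)

lemma basisFun_snoc_notMem {n : ℕ} {S : Finset ℕ} (h : n + 1 ∉ S) (x : Fin n → Bool) (b : Bool) :
    basisFun (n + 1) S (Fin.snoc x b) = basisFun n S x := by
  simp [basisFun, h]

lemma basisFun_snoc_insert_false {n : ℕ} {U : Finset ℕ} (h : n + 1 ∉ U) (x : Fin n → Bool) :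
    basisFun (n + 1) (insert (n + 1) U) (Fin.snoc x false)
      = -((wt x : ℝ) - U.card) / ((n : ℝ) - 2 * U.card) * basisFun n U x := by
  simp [basisFun, h]

lemma basisFun_snoc_insert_true {n : ℕ} {U : Finset ℕ} (h : n + 1 ∉ U) (x : Fin n → Bool) :
    basisFun (n + 1) (insert (n + 1) U) (Fin.snoc x true)
      = ((n : ℝ) - U.card - wt x) / ((n : ℝ) - 2 * U.card) * basisFun n U x := by
  simp [basisFun, h]

lemma notMem_of_subset_Icc {n : ℕ} {S : Finset ℕ} (h : S ⊆ Finset.Icc 1 n) : n + 1 ∉ S :=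
  fun h' => by have := Finset.mem_Icc.1 (h h'); omega

lemma subset_or_insert {n : ℕ} {S : Finset ℕ} (h : S ⊆ Finset.Icc 1 (n + 1)) :
    S ⊆ Finset.Icc 1 n ∨ ∃ U, U ⊆ Finset.Icc 1 n ∧ S = insert (n + 1) U := by
  by_cases hn : n + 1 ∈ S
  · right
    refine ⟨S.erase (n + 1), fun s hs => ?_, (Finset.insert_erase hn).symm⟩
    have h1 := Finset.mem_erase.1 hs
    have := Finset.mem_Icc.1 (h h1.2)
    exact Finset.mem_Icc.2 (by omega)
  · left
    intro s hs
    have := Finset.mem_Icc.1 (h hs)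
    have : s ≠ n + 1 := fun h => hn (h ▸ hs)
    exact Finset.mem_Icc.2 (by omega)

/-- A factor that is constant on `P` can be taken out of a sum over `P`. -/
lemma sum_weighted {n : ℕ} (P : (Fin n → Bool) → Prop) (c : (Fin n → Bool) → ℝ) (a : ℝ)
    (G : (Fin n → Bool) → ℝ) (hc : ∀ y, P y → c y = a) :
    ∑ y, (if P y then c y * G y else 0) = a * ∑ y, (if P y then G y else 0) := by
  rw [Finset.mul_sum]
  refine Finset.sum_congr rfl fun y _ => ?_
  split_ifs with h
  · rw [hc y h]
  · simp

/-- The up operator multiplies the basis function by `|x| - |S|`. -/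
lemma sum_covers_below (n : ℕ) : ∀ (S : Finset ℕ), S ⊆ Finset.Icc 1 n → ∀ x : Fin n → Bool,
    ∑ y, (if Covers x y then basisFun n S y else 0) = ((wt x : ℝ) - S.card) * basisFun n S x := by
  induction n with
  | zero =>
    intro S hS x
    have : S = ∅ := by simpa using hS
    subst this
    simp [Covers, wt]
  | succ n ih =>
    intro S hS x
    obtain ⟨x, b, rfl⟩ : ∃ (x' : Fin n → Bool) (b : Bool), x = Fin.snoc x' b :=
      ⟨Fin.init x, x (Fin.last n), (Fin.snoc_init_self x).symm⟩
    rcases subset_or_insert hS with hS | ⟨U, hU, rfl⟩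
    · have hn := notMem_of_subset_Icc hS
      cases b
      · simp [sum_snoc, covers_snoc_same, covers_snoc_false_true, basisFun_snoc_notMem hn,
          ih S hS, wt_snoc_false]
      · simp [sum_snoc, covers_snoc_same, covers_snoc_true_false, basisFun_snoc_notMem hn,
          ih S hS, wt_snoc_true]
        ring
    · have hn := notMem_of_subset_Icc hU
      cases b
      · simp only [sum_snoc, covers_snoc_same, covers_snoc_false_true,
          basisFun_snoc_insert_false hn, wt_snoc_false, Finset.card_insert_of_notMem hn, if_false]
        rw [sum_weighted (Covers x) _ (-((wt x : ℝ) - 1 - U.card) / ((n : ℝ) - 2 * U.card)) _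
          (fun y hy => by rw [hy.2]; push_cast; ring), ih U hU]
        push_cast
        simp
        ring
      · simp only [sum_snoc, covers_snoc_same, covers_snoc_true_false,
          basisFun_snoc_insert_false hn, basisFun_snoc_insert_true hn, wt_snoc_true,
          Finset.card_insert_of_notMem hn]
        rw [sum_weighted (Covers x) _ (((n : ℝ) - U.card - (wt x - 1)) / ((n : ℝ) - 2 * U.card)) _
          (fun y hy => by rw [hy.2]; push_cast; ring), ih U hU, Finset.sum_ite_eq' Finset.univ x]
        push_cast
        simp
        ring

/-- The down operator multiplies the basis function by `n - |S| - |x|`. -/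
lemma sum_covers_above (n : ℕ) : ∀ (S : Finset ℕ), S ⊆ Finset.Icc 1 n → ∀ y : Fin n → Bool,
    ∑ x, (if Covers x y then basisFun n S x else 0)
      = ((n : ℝ) - S.card - wt y) * basisFun n S y := by
  induction n with
  | zero =>
    intro S hS x
    have : S = ∅ := by simpa using hS
    subst this
    simp [Covers, wt]
  | succ n ih =>
    intro S hS x
    obtain ⟨x, b, rfl⟩ : ∃ (x' : Fin n → Bool) (b : Bool), x = Fin.snoc x' b :=
      ⟨Fin.init x, x (Fin.last n), (Fin.snoc_init_self x).symm⟩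
    rcases subset_or_insert hS with hS | ⟨U, hU, rfl⟩
    · have hn := notMem_of_subset_Icc hS
      cases b
      · simp [sum_snoc, covers_snoc_same, covers_snoc_true_false, basisFun_snoc_notMem hn,
          ih S hS, wt_snoc_false]
        ring
      · simp [sum_snoc, covers_snoc_same, covers_snoc_false_true, basisFun_snoc_notMem hn,
          ih S hS, wt_snoc_true, show (n : ℝ) + 1 - S.card - (wt x + 1) = n - S.card - wt x by ring]
    · have hn := notMem_of_subset_Icc hU
      cases b
      · simp only [sum_snoc, covers_snoc_same, covers_snoc_true_false,
          basisFun_snoc_insert_false hn, basisFun_snoc_insert_true hn, wt_snoc_false,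
          Finset.card_insert_of_notMem hn]
        rw [sum_weighted (fun y => Covers y x) _
          (-((wt x : ℝ) + 1 - U.card) / ((n : ℝ) - 2 * U.card)) _
          (fun y hy => by rw [hy.2]; push_cast; ring), ih U hU, Finset.sum_ite_eq Finset.univ x]
        push_cast
        simp
        ring
      · simp only [sum_snoc, covers_snoc_same, covers_snoc_false_true,
          basisFun_snoc_insert_true hn, wt_snoc_true, Finset.card_insert_of_notMem hn, if_false]
        rw [sum_weighted (fun y => Covers y x) _
          (((n : ℝ) - U.card - (wt x + 1)) / ((n : ℝ) - 2 * U.card)) _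
          (fun y hy => by rw [hy.2]; push_cast; ring), ih U hU]
        push_cast
        simp
        ring

/-- Both sides count `basisFun x * basisFun y` over the pairs where `x` covers `y` and
`|y| = k`. -/
lemma layerSum_sq_succ {n k : ℕ} {S : Finset ℕ} (hS : S ⊆ Finset.Icc 1 n) :
    ((k : ℝ) + 1 - S.card) * layerSum n (k + 1) (fun x => basisFun n S x ^ 2)
      = ((n : ℝ) - k - S.card) * layerSum n k (fun x => basisFun n S x ^ 2) := by
  have h1 : ((k : ℝ) + 1 - S.card) * layerSum n (k + 1) (fun x => basisFun n S x ^ 2)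
      = ∑ x, ∑ y, if Covers x y ∧ wt y = k then basisFun n S x * basisFun n S y else 0 := by
    rw [layerSum, Finset.mul_sum]
    refine Finset.sum_congr rfl fun x _ => ?_
    split_ifs with hx
    · have := sum_covers_below n S hS x
      rw [hx] at this
      push_cast at this
      rw [pow_two, ← mul_assoc, ← this, Finset.sum_mul]
      refine Finset.sum_congr rfl fun y _ => ?_
      by_cases hc : Covers x y
      · have : wt y = k := by have := hc.2; omega
        simp [hc, this, mul_comm]
      · simp [hc]
    · rw [mul_zero]
      refine (Finset.sum_eq_zero fun y _ => if_neg ?_).symm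
      rintro ⟨hc, hy⟩
      have := hc.2
      omega
  rw [h1, Finset.sum_comm, layerSum, Finset.mul_sum]
  refine Finset.sum_congr rfl fun y _ => ?_
  split_ifs with hy
  · have := sum_covers_above n S hS y
    rw [hy, sub_right_comm] at this
    rw [pow_two, ← mul_assoc, ← this, Finset.sum_mul]
    refine Finset.sum_congr rfl fun x _ => ?_
    by_cases hc : Covers x y
    · simp [hc, hy]
    · simp [hc]
  · simp [hy]

/-- Below weight `|S|` the basis function vanishes, by induction on the weight: the up relation
expresses a nonzero multiple of the value at `x` through values one layer lower. -/
lemma basisFun_eq_zero {n : ℕ} {S : Finset ℕ} (hS : S ⊆ Finset.Icc 1 n) :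
    ∀ (w : ℕ) (x : Fin n → Bool), wt x = w → w < S.card → basisFun n S x = 0 := by
  intro w
  induction w with
  | zero =>
    intro x hx hw
    have h := sum_covers_below n S hS x
    rw [Finset.sum_eq_zero (fun y _ => if_neg fun hc => by have := hc.2; omega), hx] at h
    have hne : (S.card : ℝ) ≠ 0 := by exact_mod_cast hw.ne'
    simpa [hne] using h
  | succ w ih =>
    intro x hx hw
    have h := sum_covers_below n S hS x
    rw [Finset.sum_eq_zero, hx] at h
    · have hne : ((w + 1 : ℕ) : ℝ) - S.card ≠ 0 := by
        rw [sub_ne_zero]; exact_mod_cast hw.ne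
      exact (mul_eq_zero.1 h.symm).resolve_left hne
    · intro y _
      split_ifs with hc
      · exact ih y (by have := hc.2; omega) (by omega)
      · rfl

/-! ### The index sets `H_{n,k}` -/

/-- The conditions defining `H_{n,k}`, without the bound on the cardinality. -/
def Good (n : ℕ) (S : Finset ℕ) : Prop :=
  S ⊆ Finset.Icc 1 n ∧ ∀ j, j < S.card → 2 * (j + 1) ≤ (S.sort (· ≤ ·)).getD j 0

lemma sort_insert_last {n : ℕ} {U : Finset ℕ} (hU : U ⊆ Finset.Icc 1 n) :
    (insert (n + 1) U).sort (· ≤ ·) = U.sort (· ≤ ·) ++ [n + 1] := by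
  have hn := notMem_of_subset_Icc hU
  refine List.Perm.eq_of_pairwise' (r := (· ≤ ·)) (Finset.pairwise_sort _ _) ?_ ?_
  · rw [List.pairwise_append]
    refine ⟨Finset.pairwise_sort _ _, by simp, fun a ha b hb => ?_⟩
    have := Finset.mem_Icc.1 (hU ((Finset.mem_sort _).1 ha))
    simp at hb
    omega
  · rw [List.perm_ext_iff_of_nodup (Finset.sort_nodup _ _)]
    · intro a; simp [or_comm]
    · rw [List.nodup_append]
      refine ⟨Finset.sort_nodup _ _, by simp, ?_⟩
      intro a ha b hb
      have := Finset.mem_Icc.1 (hU ((Finset.mem_sort _).1 ha))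
      simp at hb
      omega

lemma good_succ_iff {n : ℕ} {U : Finset ℕ} (hU : U ⊆ Finset.Icc 1 n) :
    Good (n + 1) U ↔ Good n U := by
  have : U ⊆ Finset.Icc 1 (n + 1) := hU.trans (Finset.Icc_subset_Icc_right (by omega))
  simp [Good, hU, this]

lemma good_insert_iff {n : ℕ} {U : Finset ℕ} (hU : U ⊆ Finset.Icc 1 n) :
    Good (n + 1) (insert (n + 1) U) ↔ Good n U ∧ 2 * (U.card + 1) ≤ n + 1 := by
  have hn := notMem_of_subset_Icc hU
  have h1 : insert (n + 1) U ⊆ Finset.Icc 1 (n + 1) :=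
    Finset.insert_subset (by simp) (hU.trans (Finset.Icc_subset_Icc_right (by omega)))
  have hl : (U.sort (· ≤ ·)).length = U.card := Finset.length_sort _
  simp only [Good, h1, hU, true_and, Finset.card_insert_of_notMem hn, sort_insert_last hU]
  constructor
  · intro h
    refine ⟨fun j hj => ?_, ?_⟩
    · have := h j (by omega)
      rwa [List.getD_append _ _ _ _ (by omega)] at this
    · have := h U.card (by omega)
      rwa [List.getD_append_right _ _ _ _ (by omega), hl, Nat.sub_self] at this
  · rintro ⟨h, h'⟩ j hj
    rcases Nat.lt_succ_iff_lt_or_eq.1 hj with hj | rfl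
    · rw [List.getD_append _ _ _ _ (by omega)]
      exact h j hj
    · rw [List.getD_append_right _ _ _ _ (by omega), hl, Nat.sub_self]
      exact h'

lemma Good.two_mul_card_le {n : ℕ} {U : Finset ℕ} (h : Good n U) : 2 * U.card ≤ n := by
  rcases Nat.eq_zero_or_pos U.card with h0 | h0
  · omega
  · have h1 := h.2 (U.card - 1) (by omega)
    have hl : U.card - 1 < (U.sort (· ≤ ·)).length := by
      rw [Finset.length_sort]; omega
    rw [List.getD_eq_getElem _ _ hl] at h1
    have := Finset.mem_Icc.1 (h.1 ((Finset.mem_sort _).1 (List.getElem_mem hl)))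
    omega

/-! ### Identification with the vectors `P↑_{n,|S|,k} χ_{n,S}` -/

lemma sum_slice_le {n k : ℕ} (G : (Fin n → Bool) → ℝ) (x : Fin n → Bool) (hx : wt x = k + 1) :
    ∑ y : Slice n k, (if ∀ i, y.1 i = true → x i = true then (1 : ℝ) else 0) * G y.1
      = ∑ y, if Covers x y then G y else 0 := by
  rw [sum_slice (fun y => (if ∀ i, y i = true → x i = true then (1 : ℝ) else 0) * G y), layerSum]
  refine Finset.sum_congr rfl fun y _ => ?_
  unfold Covers
  rw [hx]
  by_cases hy : wt y = k
  · simp [hy]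
  · have : ¬ k = wt y := fun h => hy h.symm
    simp [hy, this]

/-- On the slice of weight `|S|` the basis function is `χ_{n,S}`; goodness of `S` keeps the
denominators in the recursion nonzero. -/
lemma chi_eq_basisFun (n : ℕ) : ∀ (S : Finset ℕ), Good n S → ∀ x : Slice n S.card,
    chi n S x = basisFun n S x.1 := by
  induction n with
  | zero => intro S _ x; simp [chi, basisFun]
  | succ n ih =>
    intro S hS x
    rcases subset_or_insert hS.1 with hS' | ⟨U, hU, rfl⟩
    · have hn := notMem_of_subset_Icc hS'
      have hg := (good_succ_iff hS').1 hS
      simp only [chi, basisFun, hn, dif_neg, if_neg, not_false_eq_true]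
      split_ifs with hx
      · exact (basisFun_eq_zero hS' _ _ rfl
          (by have := wt_init_true x.1 hx; have h2 : wt x.1 = S.card := x.2; omega)).symm
      · rw [ih S hg]; rfl
    · have hn := notMem_of_subset_Icc hU
      obtain ⟨hg, hc⟩ := (good_insert_iff hU).1 hS
      have hne : (n : ℝ) - 2 * U.card ≠ 0 := by
        have : (2 * (U.card + 1) : ℝ) ≤ n + 1 := by exact_mod_cast hc
        intro h; linarith
      have he : (insert (n + 1) U).erase (n + 1) = U := Finset.erase_insert hn
      have hcard : (insert (n + 1) U).card = U.card + 1 := Finset.card_insert_of_notMem hn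
      have hg' : Good n ((insert (n + 1) U).erase (n + 1)) := by rwa [he]
      have hcard' : ((insert (n + 1) U).erase (n + 1)).card = U.card := by rw [he]
      have hx2 : wt x.1 = U.card + 1 := by rw [← hcard]; exact x.2
      simp only [chi, basisFun, Finset.mem_insert_self, dif_pos, if_pos]
      split_ifs with hx
      · have hw : wt (fun i : Fin n => x.1 i.castSucc) = U.card := by
          have := wt_init_true x.1 hx; omega
        rw [ih _ hg']
        change basisFun n _ (fun i : Fin n => x.1 i.castSucc) = _
        rw [hcard', hw,
          show (n : ℝ) - U.card - U.card = n - 2 * U.card by ring, div_self hne, one_mul]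
      · have hw : wt (fun i : Fin n => x.1 i.castSucc) = U.card + 1 := by
          have := wt_init_false x.1 hx; omega
        have hw' : wt (dropLast x hx).1 = ((insert (n + 1) U).erase (n + 1)).card + 1 := by
          rw [hcard']; exact hw
        have hsum := sum_slice_le (basisFun n ((insert (n + 1) U).erase (n + 1))) _ hw'
        rw [sum_covers_below n _ hg'.1] at hsum
        simp only [ih _ hg']
        rw [hsum]
        change -(((wt (fun i : Fin n => x.1 i.castSucc) : ℝ) - _) *
          basisFun n _ (fun i : Fin n => x.1 i.castSucc)) / _ = _
        simp only [hcard', hcard, hw]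
        push_cast
        rw [show (n : ℝ) + 1 - 2 * (U.card + 1) + 1 = n - 2 * U.card by ring]
        ring

/-- Removes the type cast in the definition of `upPath`. -/
lemma cast_mulVec {n a : ℕ} (v : Slice n a → ℝ) (d k : ℕ) (h : a + d = k)
    (h' : Matrix (Slice n (a + d)) (Slice n a) ℝ = Matrix (Slice n k) (Slice n a) ℝ)
    (g : (Fin n → Bool) → ℝ) (hg : ∀ x : Slice n (a + d), (upPathAux n a d).mulVec v x = g x.1)
    (x : Slice n k) : (cast h' (upPathAux n a d)).mulVec v x = g x.1 := by
  subst h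
  exact hg x

/-- Both sides satisfy the same recursion under the up operator, by `sum_covers_below`, and agree
in weight `|S|` by `chi_eq_basisFun`. -/
lemma basisVec_eq {n k : ℕ} {S : Finset ℕ} (hS : Good n S) (hk : S.card ≤ k) (x : Slice n k) :
    basisVec n k S x = ((k - S.card).factorial : ℝ) * basisFun n S x.1 := by
  unfold basisVec upPath
  rw [dif_pos hk]
  refine cast_mulVec _ _ _ (by omega) _
    (fun x => ((k - S.card).factorial : ℝ) * basisFun n S x) ?_ x
  generalize k - S.card = d
  induction d with
  | zero =>
    intro x
    change (1 : Matrix (Slice n S.card) (Slice n S.card) ℝ).mulVec (chi n S) x = _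
    rw [Matrix.one_mulVec, chi_eq_basisFun n S hS]
    simp
  | succ d ih =>
    intro x
    change (upOp n (S.card + d) * upPathAux n S.card d).mulVec (chi n S) x = _
    rw [← Matrix.mulVec_mulVec]
    have hx : wt x.1 = S.card + d + 1 := x.2
    simp only [Matrix.mulVec, dotProduct, upOp, Matrix.of_apply]
    simp only [Matrix.mulVec, dotProduct] at ih
    simp only [ih]
    rw [sum_slice_le (fun y => (d.factorial : ℝ) * basisFun n S y) x.1 hx,
      sum_weighted (Covers x.1) (fun _ => (d.factorial : ℝ)) d.factorial (basisFun n S)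
        (fun _ _ => rfl), sum_covers_below n S hS.1, hx, Nat.factorial_succ]
    push_cast
    ring

/-! ### Fourier weights -/

/-- The squared Fourier coefficient at `S` of the restriction of `F` to the slice of weight `k`,
expressed through `basisFun`. -/
noncomputable def weight (n k : ℕ) (F : (Fin n → Bool) → ℝ) (S : Finset ℕ) : ℝ :=
  if Good n S ∧ S.card ≤ k ∧ S.card + k ≤ n then
    layerSum n k (fun x => F x * basisFun n S x) ^ 2 / layerSum n k (fun x => basisFun n S x ^ 2)
  else 0

lemma wt_le {n : ℕ} (x : Fin n → Bool) : wt x ≤ n := by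
  simpa [wt] using Finset.card_le_univ (Finset.univ.filter fun i => x i = true)

lemma fourierSlice_sq {n k : ℕ} (g : Slice n k → ℝ) (F : (Fin n → Bool) → ℝ)
    (hg : ∀ x, g x = F x.1) (S : Finset ℕ) : fourierSlice n k g S ^ 2 = weight n k F S := by
  by_cases hk : k ≤ n
  · have hiff : IsH n (min k (n - k)) S ↔ Good n S ∧ S.card ≤ k ∧ S.card + k ≤ n := by
      have : S.card ≤ min k (n - k) ↔ S.card ≤ k ∧ S.card + k ≤ n := by omega
      unfold IsH Good
      rw [this]
      tauto
    unfold fourierSlice weight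
    by_cases h : IsH n (min k (n - k)) S
    · have h' := hiff.1 h
      rw [if_pos h, if_pos h', div_pow, Real.sq_sqrt (Finset.sum_nonneg fun _ _ => sq_nonneg _)]
      set c : ℝ := ((k - S.card).factorial : ℝ) with hc
      have hc0 : c ≠ 0 := by rw [hc]; exact_mod_cast Nat.factorial_ne_zero _
      have e1 : ∑ x, g x * basisVec n k S x = c * layerSum n k (fun x => F x * basisFun n S x) := by
        rw [← layerSum_mul, ← sum_slice]
        refine Finset.sum_congr rfl fun x _ => ?_
        rw [basisVec_eq h'.1 h'.2.1, hg]; ring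
      have e2 : ∑ x, basisVec n k S x ^ 2
          = c ^ 2 * layerSum n k (fun x => basisFun n S x ^ 2) := by
        rw [← layerSum_mul, ← sum_slice]
        refine Finset.sum_congr rfl fun x _ => ?_
        rw [basisVec_eq h'.1 h'.2.1]; ring
      rw [e1, e2, mul_pow, mul_div_mul_left _ _ (pow_ne_zero 2 hc0)]
    · rw [if_neg h, if_neg (fun h' => h (hiff.2 h'))]
      simp
  · -- The slice is empty.
    have : IsEmpty (Slice n k) :=
      ⟨fun x => hk (by have := wt_le x.1; rwa [show wt x.1 = k from x.2] at this)⟩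
    have h1 : ¬ (Good n S ∧ S.card ≤ k ∧ S.card + k ≤ n) := by omega
    simp [fourierSlice, weight, h1]

/-- The Pythagorean identity for `(b₀, b₁)` and `(-p b₀, q b₁)` when `p ‖b₀‖² = q ‖b₁‖²`. -/
lemma plane_identity {p q c₀ c₁ N₀ N₁ : ℝ} (hp : 0 < p) (hq : 0 < q) (hN : p * N₀ = q * N₁) :
    (c₀ + c₁) ^ 2 / (N₀ + N₁) + (-p * c₀ + q * c₁) ^ 2 / (p ^ 2 * N₀ + q ^ 2 * N₁)
      = c₀ ^ 2 / N₀ + c₁ ^ 2 / N₁ := by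
  obtain ⟨g, rfl⟩ : ∃ g, N₁ = p * g := ⟨N₁ / p, by field_simp⟩
  obtain rfl : N₀ = q * g := by
    have : p * N₀ = p * (q * g) := by rw [hN]; ring
    exact mul_left_cancel₀ hp.ne' this
  rcases eq_or_ne g 0 with rfl | hg
  · simp
  · have h1 : q * g + p * g = (p + q) * g := by ring
    have h2 : p ^ 2 * (q * g) + q ^ 2 * (p * g) = p * q * (p + q) * g := by ring
    have : p + q ≠ 0 := by positivity
    rw [h1, h2]
    field_simp
    ring

lemma weight_step_zero {n : ℕ} (F : (Fin (n + 1) → Bool) → ℝ) {U : Finset ℕ}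
    (hU : U ⊆ Finset.Icc 1 n) :
    weight (n + 1) 0 F U + weight (n + 1) 0 F (insert (n + 1) U)
      = weight n 0 (fun x => F (Fin.snoc x false)) U := by
  have hn := notMem_of_subset_Icc hU
  unfold weight
  have h2 : ¬ (Good (n + 1) (insert (n + 1) U) ∧ (insert (n + 1) U).card ≤ 0 ∧
      (insert (n + 1) U).card + 0 ≤ n + 1) := by
    rw [Finset.card_insert_of_notMem hn]; omega
  have h1 : (Good (n + 1) U ∧ U.card ≤ 0 ∧ U.card + 0 ≤ n + 1) ↔
      (Good n U ∧ U.card ≤ 0 ∧ U.card + 0 ≤ n) := by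
    rw [good_succ_iff hU]
    constructor <;> rintro ⟨a, b, c⟩ <;> exact ⟨a, b, by omega⟩
  rw [if_neg h2, add_zero]
  simp only [h1, layerSum_zero_snoc, basisFun_snoc_notMem hn]

/-- Restricting the last coordinate preserves the total weight on `U` and `U ∪ {n+1}`. -/
lemma weight_step_succ {n k : ℕ} (F : (Fin (n + 1) → Bool) → ℝ) {U : Finset ℕ}
    (hU : U ⊆ Finset.Icc 1 n) :
    weight (n + 1) (k + 1) F U + weight (n + 1) (k + 1) F (insert (n + 1) U)
      = weight n (k + 1) (fun x => F (Fin.snoc x false)) U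
        + weight n k (fun x => F (Fin.snoc x true)) U := by
  have hn := notMem_of_subset_Icc hU
  have hcard := Finset.card_insert_of_notMem hn
  unfold weight
  simp only [good_insert_iff hU, good_succ_iff hU, hcard]
  by_cases hg : Good n U
  swap
  · simp [hg]
  have h2u := hg.two_mul_card_le
  simp only [hg, true_and]
  have hN := layerSum_sq_succ (k := k) hU
  simp only [layerSum_succ_snoc, basisFun_snoc_notMem hn]
  set N₀ := layerSum n (k + 1) (fun x => basisFun n U x ^ 2) with hN₀
  set N₁ := layerSum n k (fun x => basisFun n U x ^ 2) with hN₁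
  set c₀ := layerSum n (k + 1) (fun x => F (Fin.snoc x false) * basisFun n U x) with hc₀
  set c₁ := layerSum n k (fun x => F (Fin.snoc x true) * basisFun n U x) with hc₁
  set u := U.card with hu
  have zero₀ : N₀ = 0 → c₀ = 0 := layerSum_mul_eq_zero _ _
  have zero₁ : N₁ = 0 → c₁ = 0 := layerSum_mul_eq_zero _ _
  set r : ℝ := (n : ℝ) - 2 * u with hr
  set p : ℝ := (k : ℝ) + 1 - u with hp
  set q : ℝ := (n : ℝ) - k - u with hq
  have e0 : layerSum n (k + 1) (fun x => F (Fin.snoc x false) *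
      basisFun (n + 1) (insert (n + 1) U) (Fin.snoc x false)) = -p / r * c₀ := by
    rw [hc₀, ← layerSum_mul]
    refine layerSum_congr fun x hx => ?_
    rw [basisFun_snoc_insert_false hn, hx, hp, hr]
    push_cast; ring
  have e1 : layerSum n k (fun x => F (Fin.snoc x true) *
      basisFun (n + 1) (insert (n + 1) U) (Fin.snoc x true)) = q / r * c₁ := by
    rw [hc₁, ← layerSum_mul]
    refine layerSum_congr fun x hx => ?_
    rw [basisFun_snoc_insert_true hn, hx, hq, hr]
    ring
  have f0 : layerSum n (k + 1) (fun x =>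
      basisFun (n + 1) (insert (n + 1) U) (Fin.snoc x false) ^ 2) = (p / r) ^ 2 * N₀ := by
    rw [hN₀, ← layerSum_mul]
    refine layerSum_congr fun x hx => ?_
    rw [basisFun_snoc_insert_false hn, hx, hp, hr]
    push_cast; ring
  have f1 : layerSum n k (fun x =>
      basisFun (n + 1) (insert (n + 1) U) (Fin.snoc x true) ^ 2) = (q / r) ^ 2 * N₁ := by
    rw [hN₁, ← layerSum_mul]
    refine layerSum_congr fun x hx => ?_
    rw [basisFun_snoc_insert_true hn, hx, hq, hr]
    ring
  rw [e0, e1, f0, f1]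
  by_cases hpos : u ≤ k + 1 ∧ u + k ≤ n
  swap
  · rw [if_neg (by omega), if_neg (by omega), if_neg (by omega), if_neg (by omega)]
  obtain ⟨hp0, hq0⟩ := hpos
  rcases Nat.eq_or_lt_of_le hp0 with hp1 | hp1
  · -- The case `p = 0`: the half with last coordinate `1` does not contribute.
    have hpz : p = 0 := by rw [hp, hp1]; push_cast; ring
    have hqn : u + k + 1 ≤ n := by omega
    have hq1 : q ≠ 0 := by
      have : ((u + k + 1 : ℕ) : ℝ) ≤ n := by exact_mod_cast hqn
      push_cast at this
      rw [hq]; intro h; linarith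
    have hN1z : N₁ = 0 := by
      rw [hpz, zero_mul] at hN
      exact (mul_eq_zero.1 hN.symm).resolve_left hq1
    rw [if_pos (by omega), if_neg (by omega), if_pos (by omega), if_neg (by omega), zero₁ hN1z,
      hN1z]
    simp
  · rcases Nat.eq_or_lt_of_le hq0 with hq1 | hq1
    · -- The case `q = 0`: the half with last coordinate `0` does not contribute.
      have hqz : q = 0 := by rw [hq, ← hq1]; push_cast; ring
      have hpz : p ≠ 0 := by
        have : ((u + 1 : ℕ) : ℝ) ≤ (k + 1 : ℕ) := by exact_mod_cast hp1
        push_cast at this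
        rw [hp]; intro h; linarith
      have hN0z : N₀ = 0 := by
        rw [hqz, zero_mul] at hN
        exact (mul_eq_zero.1 hN).resolve_left hpz
      rw [if_pos (by omega), if_neg (by omega), if_neg (by omega), if_pos (by omega), zero₀ hN0z,
        hN0z]
      simp
    · have hp' : 0 < p := by
        have : ((u + 1 : ℕ) : ℝ) ≤ (k + 1 : ℕ) := by exact_mod_cast hp1
        push_cast at this
        rw [hp]; linarith
      have hq' : 0 < q := by
        have : ((u + k + 1 : ℕ) : ℝ) ≤ n := by exact_mod_cast hq1
        push_cast at this
        rw [hq]; linarith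
      have hr' : r ≠ 0 := by
        have : ((2 * u + 1 : ℕ) : ℝ) ≤ n := by exact_mod_cast (by omega)
        push_cast at this
        rw [hr]; intro h; linarith
      rw [if_pos (by omega), if_pos (by omega), if_pos (by omega), if_pos (by omega),
        ← plane_identity hp' hq' hN]
      congr 1
      rw [show (-p / r * c₀ + q / r * c₁) ^ 2 = (1 / r) ^ 2 * (-p * c₀ + q * c₁) ^ 2 by ring,
        show (p / r) ^ 2 * N₀ + (q / r) ^ 2 * N₁ = (1 / r) ^ 2 * (p ^ 2 * N₀ + q ^ 2 * N₁) by ring,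
        mul_div_mul_left _ _ (by positivity)]

lemma sum_powerset_Icc_succ {i m : ℕ} (h : i ≤ m) (G : Finset ℕ → ℝ) :
    ∑ T ∈ (Finset.Icc (i + 1) (m + 1)).powerset, G T
      = ∑ T ∈ (Finset.Icc (i + 1) m).powerset, (G T + G (insert (m + 1) T)) := by
  rw [← Finset.insert_Icc_right_eq_Icc_add_one (by omega), Finset.sum_powerset_insert (by simp),
    Finset.sum_add_distrib]

/-- Restricting the last `t` coordinates, one at a time. -/
lemma weight_iterate {i : ℕ} {U : Finset ℕ} (hU : U ⊆ Finset.Icc 1 i) (t : ℕ) :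
    ∀ (k : ℕ) (F : (Fin (i + t) → Bool) → ℝ),
    ∑ T ∈ (Finset.Icc (i + 1) (i + t)).powerset, weight (i + t) k F (U ∪ T)
      = ∑ z : Fin t → Bool,
          if wt z ≤ k then weight i (k - wt z) (fun x => F (Fin.append x z)) U else 0 := by
  induction t with
  | zero =>
    intro k F
    have : ∀ (z : Fin 0 → Bool), wt z = 0 := fun z => by simp [wt]
    simp [this, Fin.append_right_nil]
  | succ t ih =>
    intro k F
    have hsub : ∀ T ∈ (Finset.Icc (i + 1) (i + t)).powerset, U ∪ T ⊆ Finset.Icc 1 (i + t) := by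
      intro T hT
      exact Finset.union_subset (hU.trans (Finset.Icc_subset_Icc_right (by omega)))
        ((Finset.mem_powerset.1 hT).trans (Finset.Icc_subset_Icc_left (by omega)))
    rw [sum_snoc]
    simp only [wt_snoc_false, wt_snoc_true, Fin.append_snoc]
    change ∑ T ∈ (Finset.Icc (i + 1) ((i + t) + 1)).powerset, weight ((i + t) + 1) k F (U ∪ T) = _
    rw [sum_powerset_Icc_succ (by omega)]
    simp only [Finset.union_insert]
    rw [← ih k (fun x => F (Fin.snoc x false))]
    cases k with
    | zero =>
      rw [Finset.sum_congr rfl fun T hT => weight_step_zero (n := i + t) F (hsub T hT)]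
      simp
    | succ k =>
      rw [Finset.sum_congr rfl fun T hT => weight_step_succ (n := i + t) (k := k) F (hsub T hT), Finset.sum_add_distrib,
        ih k (fun x => F (Fin.snoc x true))]
      simp

lemma weight_congr {m i k : ℕ} (h : i = m) (G : (Fin m → Bool) → ℝ) (G' : (Fin i → Bool) → ℝ)
    (hG : ∀ x : Fin m → Bool, G x = G' (fun j => x (Fin.cast h j))) (U : Finset ℕ) :
    weight m k G U = weight i k G' U := by
  subst h
  have : G = G' := funext hG
  rw [this]

lemma catFun_eq_append {i t : ℕ} (h : i = i + t - t) (x : Fin (i + t - t) → Bool)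
    (z : Fin t → Bool) :
    catFun (i + t) t x z = Fin.append (fun j : Fin i => x (Fin.cast h j)) z := by
  funext j
  refine Fin.addCases (fun j => ?_) (fun j => ?_) j
  · have : (j : ℕ) < i := j.2
    simp [catFun]
    rfl
  · simp [catFun]

/-- For `U ⊆ [i]`, the total normalized Fourier weight of `f` on sets extending `U`
by elements of `[n]∖[i]` equals the expectation of `f̂_x(U)²/C(i,k-|x|)` when
`x ∈ {0,1}^{n-i}` is drawn with probability `C(i,k-|x|)/C(n,k)`. -/
theorem stmt17 (n k i : ℕ) (hi : i ≤ n) (hk : k ≤ n) (f : Slice n k → ℝ)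
    (U : Finset ℕ) (hU : U ⊆ Finset.Icc 1 i) :
    (1 / (n.choose k : ℝ)) *
        ∑ T ∈ (Finset.Icc (i + 1) n).powerset, fourierSlice n k f (U ∪ T) ^ 2
      = ∑ z : Fin (n - i) → Bool,
          ((if wt z ≤ k then (i.choose (k - wt z) : ℝ) else 0) / (n.choose k : ℝ)) *
            ((1 / (if wt z ≤ k then (i.choose (k - wt z) : ℝ) else 0)) *
              fourierSliceRestrict n k (n - i) f z U ^ 2) := by
  obtain ⟨t, rfl⟩ : ∃ t, n = i + t := ⟨n - i, by omega⟩
  generalize hs : i + t - i = s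
  obtain rfl : t = s := by omega
  set F : (Fin (i + t) → Bool) → ℝ := fun x => if h : wt x = k then f ⟨x, h⟩ else 0 with hF
  have hf : ∀ x, f x = F x.1 := fun x => by
    have : wt x.1 = k := x.2
    simp [hF, this]
  simp only [fourierSlice_sq f F hf]
  rw [weight_iterate hU, Finset.mul_sum]
  refine Finset.sum_congr rfl fun z _ => ?_
  split_ifs with hz
  · have h1 : fourierSliceRestrict (i + t) k t f z U ^ 2
        = weight i (k - wt z) (fun x => F (Fin.append x z)) U := by
      rw [fourierSliceRestrict, fourierSlice_sq _ (fun x => F (catFun (i + t) t x z))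
        (fun x => ?_)]
      swap
      · rfl
      have h : i = i + t - t := by omega
      exact weight_congr h _ _ (fun x => by rw [catFun_eq_append h]) U
    rw [h1]
    rcases Nat.eq_zero_or_pos (i.choose (k - wt z)) with h0 | h0
    · -- The restricted slice is empty, so the weight vanishes along with the binomial.
      have hlt := Nat.choose_eq_zero_iff.1 h0
      have : ¬ (Good i U ∧ U.card ≤ k - wt z ∧ U.card + (k - wt z) ≤ i) := by omega
      simp [weight, this]
    · have : (i.choose (k - wt z) : ℝ) ≠ 0 := by exact_mod_cast h0.ne'
      field_simp
  · simp
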